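/- arXiv:2602.10355 — 2 statements merged into one kernel-verified Lean document; each statement's English description precedes it below -/
import Mathlib

section
/- Let G be a tree (connected acyclic simple graph) on the vertex set {0,1,…,N} with N ≥ 1, rooted at bus 0, and let x_e > 0 be the reactance of each edge e of G. For each bus m ∈ {1,…,N}, let E_m denote the set of edges on the unique path in G from bus 0 to bus m. Define the matrix X ∈ ℝ^{N×N} by X_{mn} := 2 Σ_{e ∈ E_m ∩ E_n} x_e. Then X is symmetric positive definite. -/
open Matrix

/-!
Read `v m` as an injection routed from bus `m` to the root along `P m`, and let `f e` be the sum of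
the injections routed over the line `e`. Expanding squares gives `vᵀ X v = 2 ∑ e, x e * (f e) ^ 2`,
so it suffices to find a line with nonzero flow. Among the buses with `v m ≠ 0` take one whose path
is longest. In a forest, any path from the root over the last line of `P m` extends `P m`, so by
maximality no other injection is routed over that line, and its flow is `v m ≠ 0`.
-/

section WeightedIntersections

variable {ι E R : Type*} [DecidableEq E]

/-- The matrix of weighted sizes of the pairwise intersections of a family of finite sets: the
sensitivity matrix of a grid, up to the factor `2`, when `S i` is the set of lines on the path to
bus `i` and `w` is the reactance. -/
def weightedInterMatrix [AddCommMonoid R] (S : ι → Finset E) (w : E → R) : Matrix ι ι R :=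
  Matrix.of fun i j => ∑ e ∈ S i ∩ S j, w e

/-- The flow over `e` when each `v i` is routed along all elements of `S i`. Injections are
finitely supported, as in `Matrix.PosDef`, so that `ι` may be infinite. -/
def lineFlow [AddCommMonoid R] (S : ι → Finset E) (v : ι →₀ R) (e : E) : R :=
  v.sum fun i vi => if e ∈ S i then vi else 0

theorem weightedInterMatrix_isHermitian [AddCommMonoid R] [StarAddMonoid R] {S : ι → Finset E}
    {w : E → R} (hw : ∀ i, ∀ e ∈ S i, IsSelfAdjoint (w e)) :
    (weightedInterMatrix S w).IsHermitian := by
  refine Matrix.IsHermitian.ext fun i j => ?_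
  simp only [weightedInterMatrix, Matrix.of_apply, star_sum, Finset.inter_comm (S j)]
  exact Finset.sum_congr rfl fun e he => hw i e (Finset.mem_of_mem_inter_left he)

theorem mul_weightedInterMatrix_mul [NonUnitalNonAssocSemiring R] {S : ι → Finset E} (w : E → R)
    {T : Finset E} {i : ι} (hi : S i ⊆ T) (j : ι) (a b : R) :
    a * weightedInterMatrix S w i j * b =
      ∑ e ∈ T, (if e ∈ S i then a else 0) * w e * (if e ∈ S j then b else 0) := by
  have inter_eq_filter : S i ∩ S j = {e ∈ T | e ∈ S i ∧ e ∈ S j} := by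
    ext e
    simpa using fun he _ => hi he
  simp only [weightedInterMatrix, Matrix.of_apply, inter_eq_filter, Finset.sum_filter,
    Finset.mul_sum, Finset.sum_mul]
  refine Finset.sum_congr rfl fun e _ => ?_
  split_ifs <;> simp_all

theorem sum_star_mul_weightedInterMatrix_mul [NonUnitalNonAssocSemiring R] [StarRing R]
    (S : ι → Finset E) (w : E → R) (v : ι →₀ R) :
    (v.sum fun i vi => v.sum fun j vj => star vi * weightedInterMatrix S w i j * vj) =
      ∑ e ∈ v.support.biUnion S, star (lineFlow S v e) * w e * lineFlow S v e := by
  have entry (i) (hi : i ∈ v.support) (j) :=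
    mul_weightedInterMatrix_mul w (Finset.subset_biUnion_of_mem S hi) j (star (v i)) (v j)
  calc
    _ = ∑ i ∈ v.support, ∑ j ∈ v.support, ∑ e ∈ v.support.biUnion S,
        (if e ∈ S i then star (v i) else 0) * w e * (if e ∈ S j then v j else 0) :=
      Finset.sum_congr rfl fun i hi => Finset.sum_congr rfl fun j _ => entry i hi j
    _ = ∑ e ∈ v.support.biUnion S, ∑ j ∈ v.support, ∑ i ∈ v.support,
        (if e ∈ S i then star (v i) else 0) * w e * (if e ∈ S j then v j else 0) := by
      rw [Finset.sum_comm]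
      simp only [Finset.sum_comm (s := v.support) (t := v.support.biUnion S)]
    _ = _ := by
      simp only [lineFlow, Finsupp.sum, star_sum, apply_ite star, star_zero, Finset.sum_mul,
        Finset.mul_sum]

theorem exists_lineFlow_ne_zero [AddCommMonoid R] {α : Type*} [LinearOrder α] {S : ι → Finset E}
    {rank : ι → α} {last : ι → E} (last_mem : ∀ i, last i ∈ S i)
    (rank_lt : ∀ i j, last i ∈ S j → i ≠ j → rank i < rank j) {v : ι →₀ R} (hv : v ≠ 0) :
    ∃ e ∈ v.support.biUnion S, lineFlow S v e ≠ 0 := by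
  obtain ⟨i, hi, rank_le⟩ :=
    v.support.exists_max_image rank (Finsupp.support_nonempty_iff.mpr hv)
  refine ⟨last i, Finset.mem_biUnion.mpr ⟨i, hi, last_mem i⟩, ?_⟩
  have flow_eq : lineFlow S v (last i) = v i := by
    refine (Finset.sum_eq_single_of_mem i hi fun j hj hji => if_neg fun hmem => ?_).trans
      (if_pos (last_mem i))
    exact (rank_le j hj).not_gt (rank_lt i j hmem hji.symm)
  exact flow_eq ▸ Finsupp.mem_support_iff.mp hi

theorem weightedInterMatrix_posDef [Ring R] [PartialOrder R] [StarRing R] [StarOrderedRing R]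
    [NoZeroDivisors R] {S : ι → Finset E} {w : E → R} (hw : ∀ i, ∀ e ∈ S i, 0 < w e)
    (hS : ∀ v : ι →₀ R, v ≠ 0 → ∃ e ∈ v.support.biUnion S, lineFlow S v e ≠ 0) :
    (weightedInterMatrix S w).PosDef := by
  refine ⟨weightedInterMatrix_isHermitian fun i e he => .of_nonneg (hw i e he).le, fun v hv => ?_⟩
  have weight_pos (e) (he : e ∈ v.support.biUnion S) : 0 < w e :=
    let ⟨i, _, hi⟩ := Finset.mem_biUnion.mp he
    hw i e hi
  obtain ⟨e, he, flow_ne⟩ := hS v hv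
  rw [sum_star_mul_weightedInterMatrix_mul]
  exact Finset.sum_pos' (fun e he => star_left_conjugate_nonneg (weight_pos e he).le _)
    ⟨e, he, star_left_conjugate_pos (weight_pos e he) (.of_ne_zero flow_ne)⟩

end WeightedIntersections

section Forest

variable {V : Type*} {G : SimpleGraph V}

theorem length_lt_length_of_isAcyclic_of_mem_support (hG : G.IsAcyclic) {r u v : V}
    {p : G.Walk r u} {q : G.Walk r v} (hp : p.IsPath) (hq : q.IsPath) (hu : u ∈ q.support)
    (huv : u ≠ v) : p.length < q.length := by
  classical
  have takeUntil_eq : q.takeUntil u hu = p :=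
    congrArg Subtype.val ((hG.subsingleton_path r u).elim ⟨_, hq.takeUntil hu⟩ ⟨p, hp⟩)
  exact takeUntil_eq ▸ SimpleGraph.Walk.length_takeUntil_lt_length hu huv

theorem sensitivity_matrix_posDef_general [DecidableEq V] {ι R : Type*} [Ring R] [PartialOrder R]
    [StarRing R] [StarOrderedRing R] [NoZeroDivisors R] (hG : G.IsAcyclic) {x : Sym2 V → R}
    (hx : ∀ e ∈ G.edgeSet, 0 < x e) {root : V} {bus : ι → V} (bus_injective : bus.Injective)
    (bus_ne_root : ∀ i, bus i ≠ root) {P : ∀ i, G.Walk root (bus i)} (hP : ∀ i, (P i).IsPath) :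
    Matrix.PosDef (Matrix.of fun i j =>
      2 * ∑ e ∈ (P i).edges.toFinset ∩ (P j).edges.toFinset, x e) := by
  simp only [Finset.mul_sum]
  refine weightedInterMatrix_posDef (S := fun i => (P i).edges.toFinset) (w := fun e => 2 * x e)
    (fun i e he => ?_) fun v hv => exists_lineFlow_ne_zero (rank := fun i => (P i).length)
      (last := fun i => s((P i).penultimate, bus i)) (fun i => ?_) (fun i j hij hne => ?_) hv
  · have edge_pos := hx e ((P i).edges_subset_edgeSet (List.mem_toFinset.mp he))
    simpa only [two_mul] using add_pos edge_pos edge_pos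
  · exact List.mem_toFinset.mpr <| SimpleGraph.Walk.mk_penultimate_end_mem_edges <|
      SimpleGraph.Walk.not_nil_of_ne (bus_ne_root i).symm
  · exact length_lt_length_of_isAcyclic_of_mem_support hG (hP i) (hP j)
      ((P j).snd_mem_support_of_mem_edges (List.mem_toFinset.mp hij)) (bus_injective.ne hne)

end Forest

/-- **Positive definiteness of the LinDistFlow sensitivity matrix.**
Let `G` be a tree on the buses `{0,1,…,N}` (`N ≥ 1`) rooted at bus `0`, with
positive reactances `x_e > 0` on its edges. For each bus `m ∈ {1,…,N}` let `E_m` be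
the set of edges of the unique path in `G` from `0` to `m` (here realized by a path
`P m` from `0` to `m`). Then the matrix `X` with entries
`X_{mn} = 2 Σ_{e ∈ E_m ∩ E_n} x_e` is symmetric positive definite. -/
theorem sensitivity_matrix_posDef
    (N : ℕ) (hN : 1 ≤ N)
    (G : SimpleGraph (Fin (N + 1))) (hG : G.IsTree)
    (x : Sym2 (Fin (N + 1)) → ℝ) (hx : ∀ e ∈ G.edgeSet, 0 < x e)
    (P : (m : Fin (N + 1)) → G.Walk 0 m) (hP : ∀ m, (P m).IsPath) :
    Matrix.PosDef (Matrix.of fun m n : Fin N =>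
      2 * ∑ e ∈ (P m.succ).edges.toFinset ∩ (P n.succ).edges.toFinset, x e) :=
  sensitivity_matrix_posDef_general hG.isAcyclic hx (Fin.succ_injective N) Fin.succ_ne_zero
    (fun m => hP m.succ)
end

section
/- Let G be a tree (connected acyclic simple graph) on the vertex set {0,1,…,N} with N ≥ 1, rooted at bus 0, with reactances x_e > 0. Let X ∈ ℝ^{N×N} be defined by X_{mn} := 2 Σ_{e ∈ E_m ∩ E_n} x_e, where E_m is the set of edges on the unique path in G from 0 to m. Let L := Σ_{e = {i,j} ∈ edges(G)} (2 x_e)⁻¹ (e_i − e_j)(e_i − e_j)ᵀ ∈ ℝ^{N×N}, where e_k is the k-th standard basis vector of ℝ^N for k ∈ {1,…,N} and e_0 := 0. Then X · L = I, i.e., X⁻¹ = L; the inverse sensitivity matrix is the reduced weighted Laplacian of the grid. -/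
open Matrix

/-- For buses `{0,1,…,N}` with the substation bus `0` eliminated: the reduced
incidence vector of bus `k`, i.e. the `k`-th standard basis vector of `ℝ^N` for
`k ∈ {1,…,N}` and the zero vector for `k = 0`. -/
def incVec (N : ℕ) (k : Fin (N + 1)) : Fin N → ℝ :=
  fun i => if (i : ℕ) + 1 = (k : ℕ) then 1 else 0

/-- The rank-one matrix `M_e = (e_i − e_j)(e_i − e_j)ᵀ ∈ ℝ^{N×N}` of an undirected
edge `e = {i, j}` on the buses `{0,1,…,N}`. -/
def edgeMatSym (N : ℕ) : Sym2 (Fin (N + 1)) → Matrix (Fin N) (Fin N) ℝ :=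
  Sym2.lift ⟨fun i j =>
      Matrix.vecMulVec (incVec N i - incVec N j) (incVec N i - incVec N j),
    by
      intro i j
      ext a b
      simp [Matrix.vecMulVec_apply]
      ring⟩

/-!
The set of vertices downstream of an edge `e`, those whose root path uses `e`, is a cut crossed by
`e` alone. Hence the Dirichlet form with conductances `1 / c` pairs the indicator of this set with
`f` to the increment of `f` along `e`, divided by `c e`. The row of the sensitivity matrix at `m` is
the sum of `c e` times these indicators over the edges `e` of the root path to `m`, so its pairing
with `f` telescopes to `f m - f 0`. For `f` the basis vector of a non-root vertex `k`, this is the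
`(m, k)` entry of the identity.
-/

section DirichletForm

variable {R V ι : Type*} [CommRing R]

variable (R) in
/-- The contribution `(f i - f j) * (g i - g j)` of the edge `{i, j}` to the Dirichlet form, as a
bilinear form in the potentials `f` and `g`. -/
def edgeForm : Sym2 V → LinearMap.BilinForm R (V → R) :=
  Sym2.lift ⟨fun i j =>
      let d := LinearMap.proj (R := R) (φ := fun _ : V => R) i - LinearMap.proj j
      LinearMap.BilinForm.linMulLin d d,
    fun i j => LinearMap.ext₂ fun f g => by
      simp only [LinearMap.BilinForm.linMulLin_apply, LinearMap.sub_apply, LinearMap.proj_apply]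
      ring⟩

theorem edgeForm_mk (i j : V) (f g : V → R) :
    edgeForm R s(i, j) f g = (f i - f j) * (g i - g j) := rfl

/-- The Dirichlet form of the graph `G` with edge conductances `w`; its matrix in the standard basis
of `V → R` is the weighted Laplacian. -/
def dirichletForm (G : SimpleGraph V) [Fintype G.edgeSet] (w : Sym2 V → R) :
    LinearMap.BilinForm R (V → R) :=
  ∑ e ∈ G.edgeFinset, w e • edgeForm R e

theorem dirichletForm_apply (G : SimpleGraph V) [Fintype G.edgeSet] (w : Sym2 V → R)
    (f g : V → R) : dirichletForm G w f g = ∑ e ∈ G.edgeFinset, w e * edgeForm R e f g := by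
  simp [dirichletForm, LinearMap.sum_apply]

/-- The weighted Laplacian of `G` restricted to the vertices enumerated by `s`. -/
def reducedLaplacian [DecidableEq V] (G : SimpleGraph V) [Fintype G.edgeSet] (w : Sym2 V → R)
    (s : ι → V) : Matrix ι ι R :=
  Matrix.of fun a b => dirichletForm G w (Pi.single (s a) 1) (Pi.single (s b) 1)

theorem sum_smul_single_eq_of_range_eq_compl {S : Type*} [Semiring S] [DecidableEq V] [Fintype ι]
    {s : ι → V} {r : V} (hs : Function.Injective s) (hrange : Set.range s = {r}ᶜ) {f : V → S}
    (hf : f r = 0) : ∑ a, f (s a) • (Pi.single (s a) 1 : V → S) = f := by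
  classical
  ext v
  simp only [Finset.sum_apply, Pi.smul_apply, Pi.single_apply, smul_eq_mul, mul_ite, mul_one,
    mul_zero]
  by_cases hv : v ∈ Set.range s
  · obtain ⟨a, rfl⟩ := hv
    simp [hs.eq_iff]
  · have hvr : v = r := by simpa [hrange] using hv
    have hne (a : ι) : v ≠ s a := fun h => hv ⟨a, h.symm⟩
    simp [hne, hvr ▸ hf]

end DirichletForm

section RootedPaths

open SimpleGraph

variable {R V ι : Type*} [CommRing R] {G : SimpleGraph V} {r : V}

/-- The vertices whose path from the root `r` runs through `e`; for an edge of a tree these are the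
vertices that removing `e` separates from the root. -/
def downstream (P : ∀ v, G.Walk r v) (e : Sym2 V) : Set V :=
  {v | e ∈ (P v).edges}

/-- The total weight of the edges shared by the root paths to `u` and to `v`. -/
def pathOverlap {M : Type*} [AddCommMonoid M] [DecidableEq V] (P : ∀ v, G.Walk r v)
    (c : Sym2 V → M) (u v : V) : M :=
  ∑ e ∈ (P u).edges.toFinset ∩ (P v).edges.toFinset, c e

variable {P : ∀ v, G.Walk r v}

theorem pathOverlap_eq_sum_indicator_downstream {S : Type*} [Semiring S] [DecidableEq V]
    (c : Sym2 V → S) (u : V) :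
    pathOverlap P c u =
      ∑ e ∈ (P u).edges.toFinset, c e • (downstream P e).indicator (1 : V → S) := by
  classical
  ext v
  simp [pathOverlap, downstream, Set.indicator_apply, ← Finset.sum_filter,
    ← Finset.filter_mem_eq_inter]

theorem pathOverlap_root_right {M : Type*} [AddCommMonoid M] [DecidableEq V]
    (hr : (P r).IsPath) (c : Sym2 V → M) (u : V) : pathOverlap P c u r = 0 := by
  have hnil : P r = Walk.nil := (Walk.isPath_iff_nil.1 hr).eq_nil
  simp [pathOverlap, hnil]

theorem eq_of_isPath_of_isAcyclic (hG : G.IsAcyclic) {u v : V} {p q : G.Walk u v} (hp : p.IsPath)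
    (hq : q.IsPath) : p = q :=
  congrArg Subtype.val ((hG.subsingleton_path u v).elim ⟨p, hp⟩ ⟨q, hq⟩)

theorem eq_concat_or_eq_concat_of_isAcyclic (hG : G.IsAcyclic) {u i j : V} {p : G.Walk u i}
    {q : G.Walk u j} (hp : p.IsPath) (hq : q.IsPath) (h : G.Adj i j) :
    q = p.concat h ∨ p = q.concat h.symm := by
  by_cases hi : i ∈ q.support
  · exact .inl (hG.path_concat hp hq h hi)
  · exact .inr (eq_of_isPath_of_isAcyclic hG hp (hq.concat hi h.symm))

theorem mem_downstream_iff_of_ne (hG : G.IsAcyclic) (hP : ∀ v, (P v).IsPath) {e : Sym2 V} {i j : V}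
    (h : G.Adj i j) (he : s(i, j) ≠ e) : i ∈ downstream P e ↔ j ∈ downstream P e := by
  rcases eq_concat_or_eq_concat_of_isAcyclic hG (hP i) (hP j) h with hij | hji
  · simp [downstream, hij, he.symm]
  · simp [downstream, hji, Sym2.eq_swap (a := j), he.symm]

theorem edgeForm_indicator_downstream_of_ne (hG : G.IsAcyclic) (hP : ∀ v, (P v).IsPath)
    {e e' : Sym2 V} (he' : e' ∈ G.edgeSet) (hne : e' ≠ e) (f : V → R) :
    edgeForm R e' ((downstream P e).indicator 1) f = 0 := by
  classical
  induction e' using Sym2.ind with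
  | _ i j =>
    simp [edgeForm_mk, Set.indicator_apply, mem_downstream_iff_of_ne hG hP he' hne]

theorem edgeForm_indicator_downstream_self {i j : V} (h : G.Adj i j) (hj : (P j).IsPath)
    (hij : P j = (P i).concat h) (f : V → R) :
    edgeForm R s(i, j) ((downstream P s(i, j)).indicator 1) f = f j - f i := by
  have hj_mem : j ∈ downstream P s(i, j) := by simp [downstream, hij]
  have hi_notMem : i ∉ downstream P s(i, j) := by
    have hnodup := hj.isTrail.edges_nodup
    rw [hij, Walk.edges_concat, List.nodup_concat] at hnodup
    exact hnodup.1
  simp [edgeForm_mk, hi_notMem, hj_mem]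

theorem dirichletForm_indicator_downstream [Fintype G.edgeSet] (hG : G.IsAcyclic)
    (hP : ∀ v, (P v).IsPath) (w : Sym2 V → R) {i j : V} (h : G.Adj i j)
    (hij : P j = (P i).concat h) (f : V → R) :
    dirichletForm G w ((downstream P s(i, j)).indicator 1) f = w s(i, j) * (f j - f i) := by
  rw [dirichletForm_apply, Finset.sum_eq_single_of_mem s(i, j) (mem_edgeFinset.2 h),
    edgeForm_indicator_downstream_self h (hP j) hij]
  intro e he hne
  rw [edgeForm_indicator_downstream_of_ne hG hP (mem_edgeFinset.1 he) hne, mul_zero]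

variable {K : Type*} [Field K]

theorem sum_edges_mul_dirichletForm_indicator_downstream [DecidableEq V] [Fintype G.edgeSet]
    (hG : G.IsAcyclic) (hP : ∀ v, (P v).IsPath) {c : Sym2 V → K} (hc : ∀ e ∈ G.edgeSet, c e ≠ 0)
    (f : V → K) {v : V} {q : G.Walk r v} (hq : q.IsPath) :
    ∑ e ∈ q.edges.toFinset, c e * dirichletForm G c⁻¹ ((downstream P e).indicator 1) f =
      f v - f r := by
  rw [List.sum_toFinset _ hq.isTrail.edges_nodup]
  induction q using Walk.concatRec with
  | Hnil => simp
  | @Hconcat _ i j q h ih =>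
    have hq' : q.IsPath := ((Walk.concat_isPath_iff h).1 hq).1
    have hij : P j = (P i).concat h := by
      rw [eq_of_isPath_of_isAcyclic hG (hP j) hq, eq_of_isPath_of_isAcyclic hG (hP i) hq']
    have hlast : c s(i, j) * dirichletForm G c⁻¹ ((downstream P s(i, j)).indicator 1) f =
        f j - f i := by
      rw [dirichletForm_indicator_downstream hG hP _ h hij, Pi.inv_apply,
        mul_inv_cancel_left₀ (hc _ h)]
    rw [Walk.edges_concat, List.concat_eq_append, List.map_append, List.sum_append,
      ih hP hq', List.map_singleton, List.sum_singleton, hlast]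
    ring

/-- `pathOverlap P c u` is the Green function of `G` with pole `u`, grounded at the root. -/
theorem dirichletForm_pathOverlap [DecidableEq V] [Fintype G.edgeSet] (hG : G.IsAcyclic)
    (hP : ∀ v, (P v).IsPath) {c : Sym2 V → K} (hc : ∀ e ∈ G.edgeSet, c e ≠ 0) (u : V)
    (f : V → K) : dirichletForm G c⁻¹ (pathOverlap P c u) f = f u - f r := by
  rw [pathOverlap_eq_sum_indicator_downstream,
    ← sum_edges_mul_dirichletForm_indicator_downstream hG hP hc f (hP u)]
  simp [LinearMap.sum_apply]

theorem sensitivity_mul_redLaplacian_eq_one_general [DecidableEq V] [Fintype ι] [DecidableEq ι]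
    [Fintype G.edgeSet] (hG : G.IsAcyclic) (hP : ∀ v, (P v).IsPath) {c : Sym2 V → K}
    (hc : ∀ e ∈ G.edgeSet, c e ≠ 0) {s : ι → V} (hs : Function.Injective s)
    (hrange : Set.range s = {r}ᶜ) :
    (Matrix.of fun m n => pathOverlap P c (s m) (s n)) * reducedLaplacian G c⁻¹ s = 1 := by
  ext m k
  have hsk : r ≠ s k := fun h => (hrange ▸ Set.mem_range_self k : s k ∈ ({r}ᶜ : Set V)) h.symm
  calc ∑ n, pathOverlap P c (s m) (s n) *
        dirichletForm G c⁻¹ (Pi.single (s n) 1) (Pi.single (s k) 1)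
    _ = dirichletForm G c⁻¹ (∑ n, pathOverlap P c (s m) (s n) • Pi.single (s n) 1)
        (Pi.single (s k) 1) := by simp [LinearMap.sum_apply]
    _ = dirichletForm G c⁻¹ (pathOverlap P c (s m)) (Pi.single (s k) 1) := by
      rw [sum_smul_single_eq_of_range_eq_compl hs hrange (pathOverlap_root_right (hP r) c (s m))]
    _ = (Pi.single (s k) 1 : V → K) (s m) - (Pi.single (s k) 1 : V → K) r :=
      dirichletForm_pathOverlap hG hP hc (s m) _
    _ = (1 : Matrix ι ι K) m k := by simp [Pi.single_apply, Matrix.one_apply, hs.eq_iff, hsk]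

end RootedPaths

theorem incVec_apply_eq_single (N : ℕ) (k : Fin (N + 1)) (a : Fin N) :
    incVec N k a = (Pi.single a.succ 1 : Fin (N + 1) → ℝ) k := by
  simp [incVec, Pi.single_apply, Fin.ext_iff, eq_comm]

theorem edgeMatSym_apply (N : ℕ) (e : Sym2 (Fin (N + 1))) (a b : Fin N) :
    edgeMatSym N e a b = edgeForm ℝ e (Pi.single a.succ 1) (Pi.single b.succ 1) := by
  induction e using Sym2.ind with
  | _ i j =>
    simp only [edgeMatSym, Sym2.lift_mk, Matrix.vecMulVec_apply, Pi.sub_apply,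
      incVec_apply_eq_single, edgeForm_mk]

theorem sum_smul_edgeMatSym (N : ℕ) (G : SimpleGraph (Fin (N + 1))) [Fintype G.edgeSet]
    (w : Sym2 (Fin (N + 1)) → ℝ) :
    ∑ e ∈ G.edgeFinset, w e • edgeMatSym N e = reducedLaplacian G w Fin.succ := by
  ext a b
  simp [reducedLaplacian, dirichletForm_apply, Matrix.sum_apply, edgeMatSym_apply]

/-- **The inverse sensitivity matrix is the reduced weighted Laplacian.**
Let `G` be a tree on the buses `{0,1,…,N}` (`N ≥ 1`) rooted at bus `0`, with
positive reactances `x_e > 0`. Let `X_{mn} = 2 Σ_{e ∈ E_m ∩ E_n} x_e` where `E_m`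
is the edge set of the unique path from `0` to `m` (realized by a path `P m`), and
let `L = Σ_{e ∈ edges(G)} (2 x_e)⁻¹ (e_i − e_j)(e_i − e_j)ᵀ` be the reduced
weighted Laplacian. Then `X · L = I`, i.e. `X⁻¹ = L`. -/
theorem sensitivity_mul_redLaplacian_eq_one
    (N : ℕ) (hN : 1 ≤ N)
    (G : SimpleGraph (Fin (N + 1))) [DecidableRel G.Adj] (hG : G.IsTree)
    (x : Sym2 (Fin (N + 1)) → ℝ) (hx : ∀ e ∈ G.edgeSet, 0 < x e)
    (P : (m : Fin (N + 1)) → G.Walk 0 m) (hP : ∀ m, (P m).IsPath) :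
    (Matrix.of fun m n : Fin N =>
        2 * ∑ e ∈ (P m.succ).edges.toFinset ∩ (P n.succ).edges.toFinset, x e)
      * (∑ e ∈ G.edgeFinset, (2 * x e)⁻¹ • edgeMatSym N e) = 1 := by
  rw [sum_smul_edgeMatSym N G fun e => (2 * x e)⁻¹]
  simpa only [pathOverlap, ← Finset.mul_sum, Pi.inv_def] using
    sensitivity_mul_redLaplacian_eq_one_general hG.isAcyclic hP (c := fun e => 2 * x e)
      (fun e he => mul_ne_zero two_ne_zero (hx e he).ne')
      (Fin.succ_injective N) (Fin.range_succ N)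
end
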